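/- arXiv:1810.08372 — 2 statements merged into one kernel-verified Lean document; each statement's English description precedes it below -/
import Mathlib

section
/- Let μ ≥ 1 be an integer and E a group. Suppose there exists an injective group homomorphism from E into a direct product DihedralGroup m₀ × ((i : Fin k) → DihedralGroup (m i)) × Q, where m₀ : ℕ and m : Fin k → ℕ are arbitrary (the value 0 giving the infinite dihedral group) and Q is a group in which q^μ = 1 for every q ∈ Q. Then for all g, h ∈ E, the element h^{μ+2} · g · h^{−(μ+2)} belongs to the subgroup of E generated by the set {h^i · g · h^{−i} : 0 ≤ i ≤ μ+1}. -/
/-!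
In a dihedral group, `⁅h ^ (μ + 2), g⁆ = ⁅h ^ μ, g⁆ * ⁅h ^ 2, g⁆`: either `h` is a reflection and
`h ^ 2 = 1`, or `h` and all commutators `⁅h ^ i, g⁆` are rotations, hence commute. The same
identity holds in any group whose `μ`-th powers are central. Being an identity, it passes to
products and subgroups, and unfolding the commutators writes `h ^ (μ + 2) * g * (h ^ (μ + 2))⁻¹`
in terms of the conjugates of `g` by `1`, `h ^ 2` and `h ^ μ`.
-/

open scoped commutatorElement

theorem commutatorElement_mul_left_of_commute {G : Type*} [Group G] {x y g : G}
    (hx : Commute x ⁅y, g⁆) (hxy : Commute ⁅x, g⁆ ⁅y, g⁆) : ⁅x * y, g⁆ = ⁅x, g⁆ * ⁅y, g⁆ :=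
  calc ⁅x * y, g⁆ = x * ⁅y, g⁆ * x⁻¹ * ⁅x, g⁆ := commutatorElement_mul_left_eq_conj_mul x y g
    _ = ⁅y, g⁆ * ⁅x, g⁆ := by rw [hx.eq, mul_inv_cancel_right]
    _ = ⁅x, g⁆ * ⁅y, g⁆ := hxy.eq.symm

section Dihedral

open DihedralGroup

variable {m : ℕ}

theorem dihedralGroup_commute_r_r (a b : ZMod m) : Commute (r a) (r b) := by
  rw [commute_iff_eq, r_mul_r, r_mul_r, add_comm]

theorem dihedralGroup_exists_commutatorElement_r_eq_r (a : ZMod m) (g : DihedralGroup m) :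
    ∃ b : ZMod m, ⁅r a, g⁆ = r b := by
  cases g with
  | r c => exact ⟨0, commutatorElement_eq_one_iff_commute.mpr (dihedralGroup_commute_r_r a c)⟩
  | sr c =>
    refine ⟨a + a, ?_⟩
    simp only [commutatorElement_def, inv_r, inv_sr, r_mul_sr, sr_mul_r, sr_mul_sr]
    congr 1
    ring

theorem dihedralGroup_commutatorElement_r_mul_r (a b : ZMod m) (g : DihedralGroup m) :
    ⁅r a * r b, g⁆ = ⁅r a, g⁆ * ⁅r b, g⁆ := by
  obtain ⟨c, hc⟩ := dihedralGroup_exists_commutatorElement_r_eq_r a g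
  obtain ⟨d, hd⟩ := dihedralGroup_exists_commutatorElement_r_eq_r b g
  apply commutatorElement_mul_left_of_commute
  · rw [hd]
    exact dihedralGroup_commute_r_r a d
  · rw [hc, hd]
    exact dihedralGroup_commute_r_r c d

end Dihedral

/-- The group law `⁅h ^ (n + 2), g⁆ = ⁅h ^ n, g⁆ * ⁅h ^ 2, g⁆`, which dihedral groups share with
groups of exponent dividing `n`. Multiplied by `g` on the right, it expresses the conjugate of `g`
by `h ^ (n + 2)` through those by `1`, `h ^ 2` and `h ^ n`. -/
def CommutatorPowLaw (n : ℕ) (G : Type*) [Group G] : Prop :=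
  ∀ g h : G, ⁅h ^ (n + 2), g⁆ = ⁅h ^ n, g⁆ * ⁅h ^ 2, g⁆

namespace CommutatorPowLaw

variable {n : ℕ} {G H : Type*} [Group G] [Group H]

theorem of_injective (hH : CommutatorPowLaw n H) (φ : G →* H) (hφ : Function.Injective φ) :
    CommutatorPowLaw n G := fun g h ↦ hφ <| by
  simpa only [map_mul, map_commutatorElement, map_pow] using hH (φ g) (φ h)

theorem prod (hG : CommutatorPowLaw n G) (hH : CommutatorPowLaw n H) :
    CommutatorPowLaw n (G × H) :=
  fun g h ↦ Prod.ext (hG g.1 h.1) (hH g.2 h.2)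

theorem pi {ι : Type*} {K : ι → Type*} [∀ i, Group (K i)] (hK : ∀ i, CommutatorPowLaw n (K i)) :
    CommutatorPowLaw n (∀ i, K i) :=
  fun g h ↦ funext fun i ↦ hK i (g i) (h i)

theorem of_pow_mem_center (hG : ∀ h : G, h ^ n ∈ Subgroup.center G) : CommutatorPowLaw n G := by
  intro g h
  have h_comm (x : G) : Commute (h ^ n) x := (Subgroup.mem_center_iff.mp (hG h) x).symm
  rw [pow_add]
  refine commutatorElement_mul_left_of_commute (h_comm _) ?_
  rw [commutatorElement_eq_one_iff_commute.mpr (h_comm g)]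
  exact Commute.one_left _

open DihedralGroup in
theorem dihedralGroup (n m : ℕ) : CommutatorPowLaw n (DihedralGroup m) := by
  intro g h
  cases h with
  | sr a =>
    have sq_eq_one : sr a ^ 2 = 1 := by rw [pow_two, sr_mul_self]
    rw [pow_add, sq_eq_one, mul_one, commutatorElement_one_left, mul_one]
  | r a =>
    rw [pow_add, r_pow, r_pow, dihedralGroup_commutatorElement_r_mul_r]

theorem conj_pow_mem_closure (hG : CommutatorPowLaw n G) (g h : G) :
    h ^ (n + 2) * g * (h ^ (n + 2))⁻¹ ∈
      Subgroup.closure ((fun i : ℕ ↦ h ^ i * g * (h ^ i)⁻¹) '' {0, 2, n}) := by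
  have conj_eq : h ^ (n + 2) * g * (h ^ (n + 2))⁻¹ =
      h ^ n * g * (h ^ n)⁻¹ * (h ^ 0 * g * (h ^ 0)⁻¹)⁻¹ * (h ^ 2 * g * (h ^ 2)⁻¹) := by
    simpa only [commutatorElement_def, ← mul_assoc, mul_left_inj, pow_zero, one_mul, inv_one,
      mul_one] using hG g h
  have conj_mem {i : ℕ} (hi : i ∈ ({0, 2, n} : Set ℕ)) :=
    Subgroup.subset_closure (Set.mem_image_of_mem (fun i : ℕ ↦ h ^ i * g * (h ^ i)⁻¹) hi)
  rw [conj_eq]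
  exact mul_mem (mul_mem (conj_mem (by simp)) (inv_mem (conj_mem (by simp)))) (conj_mem (by simp))

end CommutatorPowLaw

theorem dihedral_complexity_general {E Q ι : Type*} [Group E] [Group Q] (μ m₀ : ℕ) (m : ι → ℕ)
    (φ : E →* DihedralGroup m₀ × ((i : ι) → DihedralGroup (m i)) × Q)
    (hφ : Function.Injective φ) (hQ : ∀ q : Q, q ^ μ ∈ Subgroup.center Q) (g h : E) :
    h ^ (μ + 2) * g * (h ^ (μ + 2))⁻¹ ∈
      Subgroup.closure ((fun i : ℕ ↦ h ^ i * g * (h ^ i)⁻¹) '' {0, 2, μ}) := by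
  have pi_law : CommutatorPowLaw μ ((i : ι) → DihedralGroup (m i)) :=
    .pi fun i ↦ .dihedralGroup μ (m i)
  have prod_law := (CommutatorPowLaw.dihedralGroup μ m₀).prod (pi_law.prod (.of_pow_mem_center hQ))
  exact (prod_law.of_injective φ hφ).conj_pow_mem_closure g h

/-- Let `μ ≥ 1` be an integer and `E` a group embedding into a direct product
`DihedralGroup m₀ × ((i : Fin k) → DihedralGroup (m i)) × Q` where `Q` has exponent dividing `μ`
(`q ^ μ = 1` for all `q`). Then for all `g, h ∈ E`, the element `h^(μ+2) * g * h^(-(μ+2))`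
belongs to the subgroup generated by `{h^i * g * h^(-i) : 0 ≤ i ≤ μ + 1}`. -/
theorem dihedral_complexity
    {E Q : Type*} [Group E] [Group Q] (μ : ℕ) (hμ : 1 ≤ μ)
    (k m₀ : ℕ) (m : Fin k → ℕ)
    (φ : E →* DihedralGroup m₀ × ((i : Fin k) → DihedralGroup (m i)) × Q)
    (hφ : Function.Injective φ)
    (hQ : ∀ q : Q, q ^ μ = 1)
    (g h : E) :
    h ^ (μ + 2) * g * (h ^ (μ + 2))⁻¹ ∈
      Subgroup.closure {x : E | ∃ i : ℕ, i ≤ μ + 1 ∧ x = h ^ i * g * (h ^ i)⁻¹} := by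
  refine Subgroup.closure_mono ?_ (dihedral_complexity_general μ m₀ m φ hφ (by simp [hQ]) g h)
  rintro _ ⟨i, rfl | rfl | rfl, rfl⟩ <;> exact ⟨_, by omega, rfl⟩
end

section
/- Let E be a group, C a finite normal subgroup of E, and g ∈ E such that the cyclic subgroup generated by the image ḡ of g in E/C is infinite, is a normal subgroup of E/C, and has index at most 2 in E/C. Let μ be a positive integer divisible by the exponent of the holomorph Hol(C) = C ⋊ Aut(C) (the semidirect product of C by its automorphism group for the natural action). Then: (1) for every u ∈ E, u · g^μ · u⁻¹ = g^μ or u · g^μ · u⁻¹ = g^{−μ}; (2) consequently the subgroup ⟨g^μ⟩ = Subgroup.zpowers (g^μ) is normal in E; and (3) the natural homomorphism from E to (E/C) × (E/⟨g^μ⟩) (given by the two quotient maps) is injective. -/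
/-!
For the conjugation action, `C ⋊ E` maps both to `E`, by `(c, x) ↦ c * x`, and to `Hol(C)`, by
sending `x` to its action on `C`. Since `μ`-th powers vanish in `Hol(C)`, the `C`-component of
`(c, x) ^ μ` is trivial, so `(c * x) ^ μ = x ^ μ`: the power `x ^ μ` depends only on the coset of
`x` modulo `C`. As conjugation sends `ḡ` to `ḡ` or `ḡ⁻¹`, it sends `g ^ μ` to itself or its inverse
already in `E`. The embedding holds because `⟨g⟩` meets `C` trivially, `ḡ` having infinite order.
-/

section ConjugateGenerators

variable {G : Type*} [Group G] {a : G}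

theorem normal_zpowers_iff_zpowers_conj_eq :
    (Subgroup.zpowers a).Normal ↔
      ∀ u : G, Subgroup.zpowers (u * a * u⁻¹) = Subgroup.zpowers a := by
  simp [Subgroup.normal_iff_map_conj_eq, MonoidHom.map_zpowers]

theorem normal_zpowers_of_conj_eq_self_or_inv
    (h : ∀ u : G, u * a * u⁻¹ = a ∨ u * a * u⁻¹ = a⁻¹) : (Subgroup.zpowers a).Normal := by
  refine normal_zpowers_iff_zpowers_conj_eq.mpr fun u ↦ ?_
  rcases h u with hu | hu <;> simp only [hu, Subgroup.zpowers_inv]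

theorem conj_eq_self_or_inv_of_normal_zpowers (ha : ¬IsOfFinOrder a)
    (hnorm : (Subgroup.zpowers a).Normal) (u : G) : u * a * u⁻¹ = a ∨ u * a * u⁻¹ = a⁻¹ := by
  have hgen := (normal_zpowers_iff_zpowers_conj_eq.mp hnorm u).symm
  exact ((Subgroup.zpowers_eq_zpowers_iff ha).mp hgen).imp Eq.symm Eq.symm

end ConjugateGenerators

section Holomorph

/-- The holomorph `N ⋊ Aut(N)` of a group `N`, for the natural action of `Aut(N)`; an abbreviation,
so that it inherits the group structure of the semidirect product. -/
abbrev Holomorph (N : Type*) [Group N] : Type _ :=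
  N ⋊[MonoidHom.id (MulAut N)] MulAut N

variable {G : Type*} [Group G]

/-- The homomorphism from a semidirect product `N ⋊ G` to the holomorph of `N` which replaces an
element of `G` by the automorphism through which it acts. -/
def semidirectProductToHolomorph {N : Type*} [Group N] (φ : G →* MulAut N) :
    N ⋊[φ] G →* Holomorph N :=
  SemidirectProduct.map (MonoidHom.id N) φ fun _ ↦ rfl

theorem semidirectProduct_pow_eq_inr {N : Type*} [Group N] {φ : G →* MulAut N} {n : ℕ}
    (hn : Monoid.exponent (Holomorph N) ∣ n) (x : N ⋊[φ] G) :
    x ^ n = SemidirectProduct.inr (x.right ^ n) := by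
  have hhol : semidirectProductToHolomorph φ (x ^ n) = 1 := by
    rw [map_pow, Monoid.exponent_dvd_iff_forall_pow_eq_one.mp hn]
  ext
  · exact congrArg (fun y ↦ y.left) hhol
  · exact map_pow SemidirectProduct.rightHom x n

/-- The multiplication homomorphism `(c, x) ↦ c * x` to a group from the semidirect product of a
normal subgroup by the whole group acting by conjugation. -/
def conjSemidirectProductMul (C : Subgroup G) [C.Normal] : C ⋊[MulAut.conjNormal] G →* G :=
  SemidirectProduct.lift C.subtype (MonoidHom.id G) fun _ ↦ rfl

theorem coe_mul_pow_eq_pow {C : Subgroup G} [C.Normal] {n : ℕ}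
    (hn : Monoid.exponent (Holomorph C) ∣ n) (c : C) (x : G) : (c * x) ^ n = x ^ n :=
  calc
    (c * x) ^ n = conjSemidirectProductMul C (⟨c, x⟩ ^ n) :=
      (map_pow (conjSemidirectProductMul C) ⟨c, x⟩ n).symm
    _ = conjSemidirectProductMul C (SemidirectProduct.inr (x ^ n)) := by
      rw [semidirectProduct_pow_eq_inr hn]
    _ = x ^ n := SemidirectProduct.lift_inr ..

theorem pow_eq_pow_of_quotient_mk_eq {C : Subgroup G} [C.Normal] {n : ℕ}
    (hn : Monoid.exponent (Holomorph C) ∣ n) {x y : G} (hxy : (x : G ⧸ C) = y) :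
    x ^ n = y ^ n := by
  have hmem : x / y ∈ C := QuotientGroup.eq_iff_div_mem.mp hxy
  simpa using coe_mul_pow_eq_pow hn ⟨x / y, hmem⟩ y

end Holomorph

section Embedding

variable {G : Type*} [Group G]

theorem injective_quotient_mk_prod_mk_of_disjoint {H K : Subgroup G} (hHK : Disjoint H K) :
    Function.Injective fun x : G ↦ ((x : G ⧸ H), (x : G ⧸ K)) := by
  intro x y hxy
  obtain ⟨hH, hK⟩ := Prod.mk.inj hxy
  have hone : x⁻¹ * y = 1 :=
    Subgroup.disjoint_def.mp hHK (QuotientGroup.eq.mp hH) (QuotientGroup.eq.mp hK)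
  exact inv_mul_eq_one.mp hone

theorem disjoint_zpowers_of_not_isOfFinOrder_mk {C : Subgroup G} [C.Normal] {g : G}
    (hg : ¬IsOfFinOrder (g : G ⧸ C)) : Disjoint C (Subgroup.zpowers g) := by
  refine Subgroup.disjoint_def.mpr ?_
  rintro _ hmem ⟨k, rfl⟩
  have hpow : (g : G ⧸ C) ^ k = (g : G ⧸ C) ^ (0 : ℤ) := by
    simpa using (QuotientGroup.eq_one_iff _).mpr hmem
  simp [injective_zpow_iff_not_isOfFinOrder.mpr hg hpow]

end Embedding

theorem dihedral_pair_embeds_in_product_general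
    {E : Type*} [Group E] (C : Subgroup E) [C.Normal] (g : E) (μ : ℕ)
    (hinf : ¬IsOfFinOrder (g : E ⧸ C)) (hnorm : (Subgroup.zpowers (g : E ⧸ C)).Normal)
    (hexp : Monoid.exponent (Holomorph C) ∣ μ) :
    (∀ u : E, u * g ^ μ * u⁻¹ = g ^ μ ∨ u * g ^ μ * u⁻¹ = (g ^ μ)⁻¹) ∧
    (Subgroup.zpowers (g ^ μ)).Normal ∧
    Function.Injective fun x : E ↦ ((x : E ⧸ C), (x : E ⧸ Subgroup.zpowers (g ^ μ))) := by
  have hconj (u : E) : u * g ^ μ * u⁻¹ = g ^ μ ∨ u * g ^ μ * u⁻¹ = (g ^ μ)⁻¹ := by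
    rw [← conj_pow, ← inv_pow]
    exact (conj_eq_self_or_inv_of_normal_zpowers hinf hnorm u).imp
      (pow_eq_pow_of_quotient_mk_eq hexp) (pow_eq_pow_of_quotient_mk_eq hexp)
  have hdisj : Disjoint C (Subgroup.zpowers (g ^ μ)) :=
    (disjoint_zpowers_of_not_isOfFinOrder_mk hinf).mono_right
      (Subgroup.zpowers_le_of_mem (Subgroup.npow_mem_zpowers g μ))
  exact ⟨hconj, normal_zpowers_of_conj_eq_self_or_inv hconj,
    injective_quotient_mk_prod_mk_of_disjoint hdisj⟩

/-- Let `E` be a group, `C` a finite normal subgroup of `E`, and `g ∈ E` whose image `ḡ` in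
`E/C` generates an infinite cyclic subgroup which is normal of index at most `2` in `E/C`. Let
`μ ≥ 1` be divisible by the exponent of the holomorph `Hol(C) = C ⋊ Aut(C)`. Then every `u ∈ E`
conjugates `g^μ` to `g^μ` or `g^(-μ)`, the subgroup `⟨g^μ⟩` is normal in `E`, and the natural
map `E → (E/C) × (E/⟨g^μ⟩)` given by the two quotient maps is injective. -/
theorem dihedral_pair_embeds_in_product
    {E : Type*} [Group E] (C : Subgroup E) [C.Normal] [Finite C]
    (g : E) (μ : ℕ) (hμ : 0 < μ)
    (hinf : Infinite (Subgroup.zpowers (QuotientGroup.mk g : E ⧸ C)))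
    (hnorm : (Subgroup.zpowers (QuotientGroup.mk g : E ⧸ C)).Normal)
    (hindex : (Subgroup.zpowers (QuotientGroup.mk g : E ⧸ C)).index = 1 ∨
      (Subgroup.zpowers (QuotientGroup.mk g : E ⧸ C)).index = 2)
    (hexp : Monoid.exponent (C ⋊[MonoidHom.id (MulAut C)] MulAut C) ∣ μ) :
    (∀ u : E, u * g ^ μ * u⁻¹ = g ^ μ ∨ u * g ^ μ * u⁻¹ = (g ^ μ)⁻¹) ∧
    (Subgroup.zpowers (g ^ μ)).Normal ∧
    Function.Injective (fun x : E =>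
      ((QuotientGroup.mk x : E ⧸ C),
        (QuotientGroup.mk x : E ⧸ Subgroup.zpowers (g ^ μ)))) :=
  dihedral_pair_embeds_in_product_general C g μ
    (infinite_zpowers.mp (Set.infinite_coe_iff.mp hinf)) hnorm hexp
end
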